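/- There is a constant c (independent of the game) such that every coordination game without bonuses on a weighted open chain of m cycles, each cycle having n nodes, in which for every j ∈ {1,…,m−1} the two weights w_1^j (of the edge n^j → 1^j) and w_2^j (of the edge (k−1)^{j+1} → 1^j) entering the shared node 1^j are distinct, admits, from every joint strategy, a finite improvement path of length at most c·n·m³ (hence ending in a Nash equilibrium). -/

import Mathlib

open scoped Classical

namespace CG

/-- Payoff of node `i` in a coordination game on a weighted directed graph
with adjacency `adj` (an edge `j → i` is `adj j i`), edge weights `w`,
bonuses `β`, under the joint strategy `s`. -/
noncomputable def payoff {V M : Type} [Fintype V] (adj : V → V → Prop)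
    (w : V → V → ℝ) (β : V → M → ℕ) (s : V → M) (i : V) : ℝ :=
  (∑ j ∈ Finset.univ.filter (fun j => adj j i ∧ s j = s i), w j i) + (β i (s i) : ℝ)

/-- A joint strategy assigns to every node a colour from its colour set. -/
def Valid {V M : Type} (C : V → Finset M) (s : V → M) : Prop :=
  ∀ i, s i ∈ C i

/-- `s'` is a profitable deviation of the (non-empty) coalition
`K = {i | s i ≠ s' i}` from `s`. -/
def ProfDev {V M : Type} [Fintype V] (adj : V → V → Prop) (w : V → V → ℝ)
    (β : V → M → ℕ) (C : V → Finset M) (s s' : V → M) : Prop :=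
  Valid C s' ∧ s ≠ s' ∧
    ∀ i, s i ≠ s' i → payoff adj w β s i < payoff adj w β s' i

/-- A profitable deviation of a single player. -/
def UniDev {V M : Type} [Fintype V] (adj : V → V → Prop) (w : V → V → ℝ)
    (β : V → M → ℕ) (C : V → Finset M) (s s' : V → M) : Prop :=
  ProfDev adj w β C s s' ∧ ∃ i, ∀ j, j ≠ i → s j = s' j

/-- A Nash equilibrium: no single player has a profitable deviation. -/
def IsNash {V M : Type} [Fintype V] (adj : V → V → Prop) (w : V → V → ℝ)
    (β : V → M → ℕ) (C : V → Finset M) (s : V → M) : Prop :=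
  Valid C s ∧ ∀ s', ¬ UniDev adj w β C s s'

/-- A strong equilibrium: no coalition has a profitable deviation. -/
def IsStrong {V M : Type} [Fintype V] (adj : V → V → Prop) (w : V → V → ℝ)
    (β : V → M → ℕ) (C : V → Finset M) (s : V → M) : Prop :=
  Valid C s ∧ ∀ s', ¬ ProfDev adj w β C s s'

/-- There is a finite improvement path of length `L` starting at `s`
(each step a profitable single-player deviation) ending in a Nash equilibrium. -/
def ImpPath {V M : Type} [Fintype V] (adj : V → V → Prop) (w : V → V → ℝ)
    (β : V → M → ℕ) (C : V → Finset M) (s : V → M) (L : ℕ) : Prop :=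
  ∃ σ : ℕ → V → M, σ 0 = s ∧
    (∀ t, t < L → UniDev adj w β C (σ t) (σ (t + 1))) ∧
    IsNash adj w β C (σ L)

/-- There is a finite c-improvement path of length `L` starting at `s`
(each step a profitable coalition deviation) ending in a strong equilibrium. -/
def CImpPath {V M : Type} [Fintype V] (adj : V → V → Prop) (w : V → V → ℝ)
    (β : V → M → ℕ) (C : V → Finset M) (s : V → M) (L : ℕ) : Prop :=
  ∃ σ : ℕ → V → M, σ 0 = s ∧
    (∀ t, t < L → ProfDev adj w β C (σ t) (σ (t + 1))) ∧
    IsStrong adj w β C (σ L)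

/-- Adjacency of the simple cycle `1 → 2 → ⋯ → n → 1` on `Fin n`. -/
def cycAdj (n : ℕ) : Fin n → Fin n → Prop :=
  fun i j => (i.val + 1) % n = j.val

/-- Adjacency of a chain of `m` cycles, each of `n` nodes: `node j i` is the
`(i+1)`-st node of the `(j+1)`-st cycle (`0`-based indices). -/
def chainAdj {V : Type} (m n : ℕ) (node : ℕ → ℕ → V) : V → V → Prop :=
  fun u v => ∃ j i, j < m ∧ i < n ∧ u = node j i ∧ v = node j ((i + 1) % n)

/-- `node`, `k` describe an open chain of `m ≥ 2` simple cycles, each on `n ≥ 3`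
nodes, where consecutive cycles `C_j, C_{j+1}` share exactly the node
`node j 0 = node (j+1) (k j)` (with `1 ≤ k j < n`) and the cycles are
otherwise pairwise disjoint, and every vertex lies on some cycle. -/
def IsOpenChain {V : Type} (m n : ℕ) (node : ℕ → ℕ → V) (k : ℕ → ℕ) : Prop :=
  2 ≤ m ∧ 3 ≤ n ∧
  (∀ j, j + 1 < m → 1 ≤ k j ∧ k j < n) ∧
  (∀ j, j + 1 < m → node j 0 = node (j + 1) (k j)) ∧
  (∀ j i j' i', j < m → i < n → j' < m → i' < n → node j i = node j' i' →
      (j = j' ∧ i = i') ∨ (j' = j + 1 ∧ i = 0 ∧ i' = k j) ∨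
      (j = j' + 1 ∧ i' = 0 ∧ i = k j')) ∧
  (∀ v : V, ∃ j i, j < m ∧ i < n ∧ node j i = v)

/-- As `IsOpenChain`, but additionally the last cycle shares exactly the node
`node (m-1) 0 = node 0 (k (m-1))` with the first one. -/
def IsClosedChain {V : Type} (m n : ℕ) (node : ℕ → ℕ → V) (k : ℕ → ℕ) : Prop :=
  2 ≤ m ∧ 3 ≤ n ∧
  (∀ j, j < m → 1 ≤ k j ∧ k j < n) ∧
  (∀ j, j + 1 < m → node j 0 = node (j + 1) (k j)) ∧
  node (m - 1) 0 = node 0 (k (m - 1)) ∧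
  (∀ j i j' i', j < m → i < n → j' < m → i' < n → node j i = node j' i' →
      (j = j' ∧ i = i') ∨ (j' = j + 1 ∧ i = 0 ∧ i' = k j) ∨
      (j = j' + 1 ∧ i' = 0 ∧ i = k j') ∨
      (j = m - 1 ∧ j' = 0 ∧ i = 0 ∧ i' = k (m - 1)) ∨
      (j' = m - 1 ∧ j = 0 ∧ i' = 0 ∧ i = k (m - 1))) ∧
  (∀ v : V, ∃ j i, j < m ∧ i < n ∧ node j i = v)

/-!
The cycles are made stable from the first to the last. When `node (j + 1) 0`, the only node of
cycle `j + 1` with an input from above, changes its colour, one pass around cycle `j + 1` makes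
everything else on the cycles `0, …, j + 1` stable again: first the nodes before the shared node
`node j 0`, then the cycles `0, …, j`, then the nodes after it. The change dies out on the way, or
else it arrives: the last node of the cycle then plays the colour `y` of `node j 0`. In the second
case, if `y` is also a best reply of `node (j + 1) 0`, play is nearly over: when `node (j + 1) 0`
switches to `y`, the colour that comes back to `node j 0` is either the old one or `y` itself, and
`node j 0` is content with both.

It remains to make `node (j + 1) 0` reply so that the only colour it can want after the pass is
`y`. A reply `t` that differs from the colour `p` of the last node achieves this, because replacing
`p` by `y` raises the score of `y` only. When the instability of `node (j + 1) 0` was caused by a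
new input `x` from above, preferring `x` among the best replies achieves it too. Restabilising
cycle `j + 1` thus costs one restabilisation of cycle `j` plus `O(n)` deviations, and extending
stability by one cycle costs three of them plus `O(n)`, which gives the bound `O(n * m ^ 2)`.
-/

section BestReply

variable {M : Type*}

/-- `c` is a best reply from the palette `A` for a player with two sources, of colours `p` and `x`
and weights `a` and `b`. -/
def IsBestReply (A : Finset M) (a b : ℝ) (p x c : M) : Prop :=
  c ∈ A ∧ ∀ d ∈ A, (if p = d then a else 0) + (if x = d then b else 0) ≤
    (if p = c then a else 0) + (if x = c then b else 0)

variable {A : Finset M} {a b : ℝ} {p x x₀ y c c₀ : M}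

theorem exists_isBestReply (hA : A.Nonempty) (a b : ℝ) (p x : M) :
    ∃ c, IsBestReply A a b p x c :=
  Finset.exists_max_image A _ hA

theorem IsBestReply.swap (h : IsBestReply A a b p x c) : IsBestReply A b a x p c := by
  simpa only [IsBestReply, add_comm] using h

theorem IsBestReply.right_self (hb : 0 ≤ b) (h : IsBestReply A a b p x c) :
    IsBestReply A a b p c c := by
  refine ⟨h.1, fun d hd => ?_⟩
  have := h.2 d hd
  grind

theorem IsBestReply.left_self (ha : 0 ≤ a) (h : IsBestReply A a b p x c) :
    IsBestReply A a b c x c :=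
  (h.swap.right_self ha).swap

/-- Changing the left source from `p ≠ c` to `y` raises no score except that of `y`. -/
theorem IsBestReply.left_best_of_not (ha : 0 ≤ a) (h : IsBestReply A a b p x c) (hc : c ≠ p)
    (hy : ¬ IsBestReply A a b y x c) : IsBestReply A a b y x y := by
  simp only [IsBestReply, h.1, true_and, not_forall, not_le] at hy
  obtain ⟨d, hd, hlt⟩ := hy
  have hdy : d = y := by
    have := h.2 d hd
    grind
  subst hdy
  refine ⟨hd, fun e he => ?_⟩
  have := h.2 e he
  grind

/-- If `c = p`, the failure of `c₀` after the input changes from `x₀` to `x` forces `a ≤ b`, so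
that `x`, if available, would have been preferred. -/
theorem IsBestReply.left_best_of_right_preferred (ha : 0 ≤ a) (hb : 0 ≤ b)
    (hc₀ : IsBestReply A a b p x₀ c₀) (hc₀' : ¬ IsBestReply A a b p x c₀)
    (hc : IsBestReply A a b p x c) (hpref : IsBestReply A a b p x x → c = x)
    (hy : ¬ IsBestReply A a b y x c) : IsBestReply A a b y x y := by
  by_cases hcp : c = p
  · subst hcp
    have hab : a ≤ b := by
      have := hc₀.2 c hc.1
      grind
    have hx : x ∈ A → c = x := fun hx => hpref ⟨hx, fun d hd => by
      have := hc.2 d hd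
      grind⟩
    simp only [IsBestReply, hc.1, true_and, not_forall, not_le] at hy
    obtain ⟨d, hd, hlt⟩ := hy
    have hdy : d = y := by grind
    subst hdy
    exact ⟨hd, fun e he => by grind⟩
  · exact hc.left_best_of_not ha hcp hy

end BestReply

/-- A coordination game on a weighted directed graph, bundling the parameters of `payoff`, `UniDev`
and `IsNash`. -/
structure Game (V M : Type) where
  adj : V → V → Prop
  weight : V → V → ℝ
  bonus : V → M → ℕ
  colours : V → Finset M

namespace Game

variable {V M : Type} [Fintype V] {G : Game V M} {s s' s'' : V → M} {u : V} {c : M}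
  {D D' : Set V} {B B' : ℕ}

/-- The colour of `u` is a best response to the other colours. -/
def Stable (G : Game V M) (s : V → M) (u : V) : Prop :=
  s u ∈ G.colours u ∧ ∀ c ∈ G.colours u,
    payoff G.adj G.weight G.bonus (Function.update s u c) u ≤
      payoff G.adj G.weight G.bonus s u

/-- Every node of `D` plays a best response. -/
def StableOn (G : Game V M) (s : V → M) (D : Set V) : Prop :=
  ∀ u ∈ D, G.Stable s u

/-- `G.Reach D B s s'`: some path of at most `B` profitable single-player deviations, all of them
by players in `D`, leads from `s` to `s'`. -/
inductive Reach (G : Game V M) (D : Set V) : ℕ → (V → M) → (V → M) → Prop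
  | refl (B : ℕ) (s : V → M) : Reach G D B s s
  | head {B : ℕ} {s s' s'' : V → M} (hdev : UniDev G.adj G.weight G.bonus G.colours s s')
      (hframe : Set.EqOn s' s Dᶜ) (hreach : Reach G D B s' s'') : Reach G D (B + 1) s s''

theorem StableOn.mono (h : G.StableOn s D') (hD : D ⊆ D') : G.StableOn s D :=
  fun u hu => h u (hD hu)

theorem payoff_congr (hu : s' u = s u) (hadj : ∀ x, G.adj x u → s' x = s x) :
    payoff G.adj G.weight G.bonus s' u = payoff G.adj G.weight G.bonus s u := by
  have hfilter : Finset.univ.filter (fun x => G.adj x u ∧ s' x = s' u) =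
      Finset.univ.filter (fun x => G.adj x u ∧ s x = s u) :=
    Finset.filter_congr fun x _ => and_congr_right fun hx => by rw [hadj x hx, hu]
  rw [payoff, payoff, hfilter, hu]

theorem Stable.congr (h : G.Stable s u) (hu : s' u = s u)
    (hadj : ∀ x, G.adj x u → s' x = s x) : G.Stable s' u := by
  refine ⟨hu ▸ h.1, fun c hc => ?_⟩
  rw [payoff_congr hu hadj, payoff_congr (s := Function.update s u c)]
  · exact h.2 c hc
  · simp
  · intro x hx
    by_cases hxu : x = u <;> simp [hxu, hadj _ hx]

theorem StableOn.congr (h : G.StableOn s D) (hD : D ⊆ D')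
    (hadj : ∀ u ∈ D, ∀ x, G.adj x u → x ∈ D') (heq : Set.EqOn s' s D') : G.StableOn s' D :=
  fun u hu => (h u hu).congr (heq (hD hu)) fun x hx => heq (hadj u hu x hx)

theorem isNash_of_forall_stable (h : ∀ u, G.Stable s u) :
    IsNash G.adj G.weight G.bonus G.colours s := by
  refine ⟨fun u => (h u).1, ?_⟩
  rintro s' ⟨⟨hvalid, hne, hbetter⟩, u, hother⟩
  have hupdate : s' = Function.update s u (s' u) :=
    Function.eq_update_iff.2 ⟨rfl, fun x hx => (hother x hx).symm⟩
  have hu : s u ≠ s' u := fun hu =>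
    hne (by rw [hupdate, ← hu, Function.update_eq_self])
  have hle := (h u).2 (s' u) (hvalid u)
  rw [← hupdate] at hle
  exact (hbetter u hu).not_ge hle

namespace Reach

theorem mono (h : G.Reach D B s s') (hD : D ⊆ D') (hB : B ≤ B') : G.Reach D' B' s s' := by
  induction h generalizing B' with
  | refl => exact refl _ _
  | head hdev hframe _ ih =>
    obtain ⟨B', rfl⟩ := Nat.exists_eq_succ_of_ne_zero (by omega : B' ≠ 0)
    exact head hdev (hframe.mono (Set.compl_subset_compl.2 hD)) (ih (by omega))

theorem trans (h : G.Reach D B s s') (h' : G.Reach D B' s' s'') :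
    G.Reach D (B + B') s s'' := by
  induction h with
  | refl => exact h'.mono subset_rfl (by omega)
  | head hdev hframe _ ih => exact (head hdev hframe (ih h')).mono subset_rfl (by omega)

theorem valid (h : G.Reach D B s s') (hs : Valid G.colours s) : Valid G.colours s' := by
  induction h with
  | refl => exact hs
  | head hdev _ _ ih => exact ih hdev.1.1

theorem eqOn_compl (h : G.Reach D B s s') : Set.EqOn s' s Dᶜ := by
  induction h with
  | refl => exact Set.eqOn_refl _ _
  | head _ hframe _ ih => exact ih.trans hframe

theorem eqOn (h : G.Reach D B s s') (hD : Disjoint D D') : Set.EqOn s' s D' :=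
  h.eqOn_compl.mono (Set.subset_compl_iff_disjoint_left.2 hD)

theorem exists_impPath (h : G.Reach D B s s')
    (hs' : IsNash G.adj G.weight G.bonus G.colours s') :
    ∃ L ≤ B, ImpPath G.adj G.weight G.bonus G.colours s L := by
  induction h with
  | refl B s => exact ⟨0, B.zero_le, fun _ => s, rfl, by simp, hs'⟩
  | @head B s _ _ hdev _ _ ih =>
    obtain ⟨L, hL, σ, hzero, hstep, hlast⟩ := ih hs'
    refine ⟨L + 1, by omega, fun t => t.casesOn s σ, rfl, ?_, hlast⟩
    rintro (_ | t) ht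
    · simpa [hzero] using hdev
    · exact hstep t (by omega)

end Reach

theorem exists_stable_update (hu : (G.colours u).Nonempty) (s : V → M) :
    ∃ c, G.Stable (Function.update s u c) u := by
  obtain ⟨c, hc, hmax⟩ := Finset.exists_max_image (G.colours u)
    (fun c => payoff G.adj G.weight G.bonus (Function.update s u c) u) hu
  exact ⟨c, by simpa using hc, by simpa using hmax⟩

theorem payoff_lt_of_stable_update (hs : s u ∈ G.colours u) (hu : ¬ G.Stable s u)
    (hc : G.Stable (Function.update s u c) u) :
    payoff G.adj G.weight G.bonus s u <
      payoff G.adj G.weight G.bonus (Function.update s u c) u := by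
  simp only [Stable, hs, true_and, not_forall, not_le] at hu
  obtain ⟨d, hd, hlt⟩ := hu
  have hle := hc.2 d hd
  rw [Function.update_idem] at hle
  exact hlt.trans_le hle

theorem reach_update (hs : Valid G.colours s) (hu : ¬ G.Stable s u)
    (hc : G.Stable (Function.update s u c) u) :
    G.Reach {u} 1 s (Function.update s u c) := by
  have hlt := payoff_lt_of_stable_update (hs u) hu hc
  have hother : ∀ x, x ≠ u → Function.update s u c x = s x := fun x hx =>
    Function.update_of_ne hx _ _
  refine .head ⟨⟨fun x => ?_, fun h => ?_, fun x hx => ?_⟩, u, fun x hx => (hother x hx).symm⟩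
    hother (.refl 0 _)
  · by_cases hxu : x = u
    · exact hxu ▸ hc.1
    · exact hother x hxu ▸ hs x
  · rw [← h] at hlt
    exact hlt.false
  · obtain rfl : x = u := by_contra fun hxu => hx (hother x hxu).symm
    exact hlt

theorem payoff_nonneg (hweight : ∀ u v, G.adj u v → 0 ≤ G.weight u v) (s : V → M) (u : V) :
    0 ≤ payoff G.adj G.weight G.bonus s u :=
  add_nonneg (Finset.sum_nonneg fun x hx => hweight x u (Finset.mem_filter.1 hx).2.1)
    (Nat.cast_nonneg _)

theorem exists_adj_eq_of_payoff_pos (hbonus : ∀ v c, G.bonus v c = 0)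
    (h : 0 < payoff G.adj G.weight G.bonus s u) : ∃ x, G.adj x u ∧ s u = s x := by
  rw [payoff, hbonus, Nat.cast_zero, add_zero] at h
  obtain ⟨x, hx, -⟩ := Finset.exists_ne_zero_of_sum_ne_zero h.ne'
  obtain ⟨hadj, heq⟩ := (Finset.mem_filter.1 hx).2
  exact ⟨x, hadj, heq.symm⟩

theorem exists_reach_stable (hbonus : ∀ v c, G.bonus v c = 0)
    (hweight : ∀ u v, G.adj u v → 0 ≤ G.weight u v) (hs : Valid G.colours s) (u : V) :
    ∃ s', G.Reach {u} 1 s s' ∧ G.Stable s' u ∧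
      (s' = s ∨ ¬ G.Stable s u ∧ ∃ x, G.adj x u ∧ s' u = s' x) := by
  by_cases hu : G.Stable s u
  · exact ⟨s, .refl 1 s, hu, .inl rfl⟩
  obtain ⟨c, hc⟩ := exists_stable_update ⟨s u, hs u⟩ s
  refine ⟨_, reach_update hs hu hc, hc, .inr ⟨hu, exists_adj_eq_of_payoff_pos hbonus ?_⟩⟩
  exact (payoff_nonneg hweight s u).trans_lt (payoff_lt_of_stable_update (hs u) hu hc)

theorem StableOn.congr_path {v : ℕ → V} {a b : ℕ}
    (hadj : ∀ i, a ≤ i → i < b → ∀ x, G.adj x (v (i + 1)) → x = v i)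
    (h : G.StableOn s (v '' Set.Ioc a b)) (heq : Set.EqOn s' s (v '' Set.Icc a b)) :
    G.StableOn s' (v '' Set.Ioc a b) := by
  refine h.congr (Set.image_mono Set.Ioc_subset_Icc_self) ?_ heq
  rintro _ ⟨i, ⟨hai, hib⟩, rfl⟩ x hx
  obtain ⟨i, rfl⟩ := Nat.exists_eq_succ_of_ne_zero (by omega : i ≠ 0)
  exact ⟨i, ⟨by omega, by omega⟩, (hadj i (by omega) (by omega) x hx).symm⟩

/-- The nodes of a path respond in order. Against a reference state `s₀` in which the path was
stable, either its last node keeps its old colour or the colour of `v a` has travelled all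
the way. -/
theorem exists_reach_stableOn_path (hbonus : ∀ v c, G.bonus v c = 0)
    (hweight : ∀ u v, G.adj u v → 0 ≤ G.weight u v) {v : ℕ → V} {a b : ℕ} (hab : a ≤ b)
    (hinj : Set.InjOn v (Set.Icc a b))
    (hadj : ∀ i, a ≤ i → i < b → ∀ x, G.adj x (v (i + 1)) → x = v i)
    (hs : Valid G.colours s) :
    ∃ s', G.Reach (v '' Set.Ioc a b) (b - a) s s' ∧ G.StableOn s' (v '' Set.Ioc a b) ∧
      ∀ s₀, Set.EqOn s s₀ (v '' Set.Ioc a b) → G.StableOn s₀ (v '' Set.Ioc a b) →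
        s' (v b) = s₀ (v b) ∨ s' (v b) = s (v a) := by
  induction b, hab using Nat.le_induction with
  | base => exact ⟨s, .refl _ _, by simp [StableOn], fun _ _ _ => .inr rfl⟩
  | succ b hab ih =>
    have hIoc : Set.Ioc a (b + 1) = insert (b + 1) (Set.Ioc a b) :=
      (Set.insert_Ioc_right_eq_Ioc_add_one hab).symm
    have hnotMem : v (b + 1) ∉ v '' Set.Icc a b := by
      rintro ⟨i, ⟨hai, hib⟩, hi⟩
      have := hinj ⟨hai, by omega⟩ ⟨by omega, le_rfl⟩ hi
      omega
    have hpath : v '' Set.Ioc a b ⊆ v '' Set.Icc a b := Set.image_mono Set.Ioc_subset_Icc_self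
    obtain ⟨s₁, hreach₁, hstable₁, hlast₁⟩ :=
      ih (hinj.mono (Set.Icc_subset_Icc_right b.le_succ)) fun i hai hib => hadj i hai (by omega)
    obtain ⟨s₂, hreach₂, hstable₂, hcopy⟩ :=
      exists_reach_stable hbonus hweight (hreach₁.valid hs) (v (b + 1))
    have heq₂ : Set.EqOn s₂ s₁ (v '' Set.Icc a b) :=
      hreach₂.eqOn (Set.disjoint_singleton_left.2 hnotMem)
    rw [hIoc, Set.image_insert_eq]
    refine ⟨s₂, ?_, ?_, fun s₀ heq₀ hstable₀ => ?_⟩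
    · exact ((hreach₁.mono (Set.subset_insert _ _) le_rfl).trans
        (hreach₂.mono (by simp) le_rfl)).mono subset_rfl (by omega)
    · rintro u (rfl | hu)
      · exact hstable₂
      · exact hstable₁.congr_path (fun i hai hib => hadj i hai (by omega)) heq₂ u hu
    · have hkeep : s₁ (v (b + 1)) = s₀ (v (b + 1)) :=
        (hreach₁.eqOn_compl fun h => hnotMem (hpath h)).trans (heq₀ (Set.mem_insert _ _))
      rcases hcopy with rfl | ⟨hunstable, x, hx, hcopy⟩
      · exact .inl hkeep
      obtain rfl := hadj b hab (by omega) x hx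
      rcases hlast₁ s₀ (heq₀.mono (Set.subset_insert _ _))
        (hstable₀.mono (Set.subset_insert _ _)) with hold | hnew
      · refine absurd ((hstable₀ _ (Set.mem_insert _ _)).congr hkeep fun x hx => ?_) hunstable
        rwa [hadj b hab (by omega) x hx]
      · exact .inr (hcopy.trans ((heq₂ ⟨b, ⟨hab, le_rfl⟩, rfl⟩).trans hnew))

end Game

/-- A bonus-free coordination game with non-negative weights on an open chain of cycles, with the
indexing of `IsOpenChain`. -/
structure OpenChainGame (V M : Type) extends Game V M where
  m : ℕ
  n : ℕ
  node : ℕ → ℕ → V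
  k : ℕ → ℕ
  isOpenChain : IsOpenChain m n node k
  adj_eq : adj = chainAdj m n node
  bonus_eq_zero : ∀ v c, bonus v c = 0
  weight_nonneg : ∀ u v, adj u v → 0 ≤ weight u v

namespace OpenChainGame

variable {V M : Type}

section Structure

variable (G : OpenChainGame V M) {j i i' a b : ℕ} {x u : V}

/-- The union of the cycles `0, …, j`. -/
def upTo (j : ℕ) : Set V :=
  {u | ∃ j' ≤ j, ∃ i < G.n, u = G.node j' i}

/-- The predecessor of `node j 0` within cycle `j`. -/
abbrev last (j : ℕ) : V :=
  G.node j (G.n - 1)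

/-- The predecessor of the shared node `node j 0` within cycle `j + 1`, if `j + 1 < m`. -/
abbrev entry (j : ℕ) : V :=
  G.node (j + 1) (G.k j - 1)

/-- The nodes of cycle `j` with index in the half-open interval `(a, b]`. -/
def arc (j a b : ℕ) : Set V :=
  G.node j '' Set.Ioc a b

/-- The nodes of cycle `j + 1` strictly between its node `0` and the shared node `node j 0`. -/
def before (j : ℕ) : Set V :=
  G.arc (j + 1) 0 (G.k j - 1)

/-- The nodes of cycle `j + 1` strictly between the shared node `node j 0` and its node `0`. -/
def after (j : ℕ) : Set V :=
  G.arc (j + 1) (G.k j) (G.n - 1)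

theorem three_le_n : 3 ≤ G.n := G.isOpenChain.2.1

theorem k_pos (hj : j + 1 < G.m) : 0 < G.k j := (G.isOpenChain.2.2.1 j hj).1

theorem k_lt (hj : j + 1 < G.m) : G.k j < G.n := (G.isOpenChain.2.2.1 j hj).2

theorem node_zero (hj : j + 1 < G.m) : G.node j 0 = G.node (j + 1) (G.k j) :=
  G.isOpenChain.2.2.2.1 j hj

theorem eq_or_shared_of_node_eq {j' : ℕ} (hj : j < G.m) (hi : i < G.n) (hj' : j' < G.m)
    (hi' : i' < G.n) (h : G.node j i = G.node j' i') :
    (j = j' ∧ i = i') ∨ (j' = j + 1 ∧ i = 0 ∧ i' = G.k j) ∨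
      (j = j' + 1 ∧ i' = 0 ∧ i = G.k j') :=
  G.isOpenChain.2.2.2.2.1 j i j' i' hj hi hj' hi' h

theorem injOn_node (hj : j < G.m) : Set.InjOn (G.node j) (Set.Iio G.n) := by
  intro i hi i' hi' h
  rcases G.eq_or_shared_of_node_eq hj hi hj hi' h with h | h | h <;> omega

theorem node_ne (hj : j < G.m) (hi : i < G.n) (hi' : i' < G.n) (h : i ≠ i') :
    G.node j i ≠ G.node j i' :=
  (G.injOn_node hj).ne hi hi' h

theorem node_mem_upTo (hi : i < G.n) : G.node j i ∈ G.upTo j :=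
  ⟨j, le_rfl, i, hi, rfl⟩

theorem node_zero_mem_upTo (j : ℕ) : G.node j 0 ∈ G.upTo j :=
  G.node_mem_upTo (by have := G.three_le_n; omega)

theorem upTo_subset_upTo_succ (j : ℕ) : G.upTo j ⊆ G.upTo (j + 1) := by
  rintro u ⟨j', hj', hu⟩
  exact ⟨j', by omega, hu⟩

theorem node_succ_notMem_upTo (hj : j + 1 < G.m) (hi : i < G.n) (hk : i ≠ G.k j) :
    G.node (j + 1) i ∉ G.upTo j := by
  rintro ⟨j', hj', i', hi', h⟩
  rcases G.eq_or_shared_of_node_eq hj hi (by omega) hi' h with h | h | ⟨hjj, -, hik⟩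
  · omega
  · omega
  · obtain rfl : j = j' := by omega
    exact hk hik

theorem node_zero_succ_notMem_upTo (hj : j + 1 < G.m) : G.node (j + 1) 0 ∉ G.upTo j :=
  G.node_succ_notMem_upTo hj (by have := G.three_le_n; omega) (G.k_pos hj).ne

theorem upTo_zero_diff : G.upTo 0 \ {G.node 0 0} = G.arc 0 0 (G.n - 1) := by
  have hm : 0 < G.m := Nat.zero_lt_of_lt G.isOpenChain.1
  apply Set.Subset.antisymm
  · rintro _ ⟨⟨j, hj, i, hi, rfl⟩, hne⟩
    obtain rfl := Nat.le_zero.1 hj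
    have : i ≠ 0 := by rintro rfl; exact hne rfl
    exact ⟨i, ⟨by omega, by omega⟩, rfl⟩
  · rintro _ ⟨i, ⟨hi, hin⟩, rfl⟩
    exact ⟨G.node_mem_upTo (by omega), G.node_ne hm (by omega) (by omega) hi.ne'⟩

theorem upTo_succ_diff (hj : j + 1 < G.m) : G.upTo (j + 1) \ {G.node (j + 1) 0} =
    G.upTo j ∪ G.before j ∪ G.after j := by
  have hk := G.k_pos hj
  have hkn := G.k_lt hj
  apply Set.Subset.antisymm
  · rintro _ ⟨⟨j', hj', i, hi, rfl⟩, hne⟩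
    obtain hlt | rfl := hj'.lt_or_eq
    · exact .inl (.inl ⟨j', by omega, i, hi, rfl⟩)
    have hi0 : i ≠ 0 := by rintro rfl; exact hne rfl
    rcases lt_trichotomy i (G.k j) with hik | rfl | hik
    · exact .inl (.inr ⟨i, ⟨by omega, by omega⟩, rfl⟩)
    · exact .inl (.inl (G.node_zero hj ▸ G.node_zero_mem_upTo j))
    · exact .inr ⟨i, ⟨by omega, by omega⟩, rfl⟩
  · rintro u ((hu | ⟨i, ⟨hi, hik⟩, rfl⟩) | ⟨i, ⟨hi, hin⟩, rfl⟩)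
    · refine ⟨G.upTo_subset_upTo_succ j hu, ?_⟩
      rintro rfl
      exact G.node_succ_notMem_upTo hj (by omega) (by omega) hu
    · exact ⟨G.node_mem_upTo (by omega), G.node_ne hj (by omega) (by omega) (by omega)⟩
    · exact ⟨G.node_mem_upTo (by omega), G.node_ne hj (by omega) (by omega) (by omega)⟩

theorem upTo_subset_upTo_succ_diff (hj : j + 1 < G.m) :
    G.upTo j ⊆ G.upTo (j + 1) \ {G.node (j + 1) 0} := by
  rw [G.upTo_succ_diff hj]
  exact fun u hu => .inl (.inl hu)

theorem before_subset_upTo_succ_diff (hj : j + 1 < G.m) :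
    G.before j ⊆ G.upTo (j + 1) \ {G.node (j + 1) 0} := by
  rw [G.upTo_succ_diff hj]
  exact fun u hu => .inl (.inr hu)

theorem after_subset_upTo_succ_diff (hj : j + 1 < G.m) :
    G.after j ⊆ G.upTo (j + 1) \ {G.node (j + 1) 0} := by
  rw [G.upTo_succ_diff hj]
  exact fun u hu => .inr hu

theorem node_notMem_arc (hj : j < G.m) (hi : i < G.n) (hb : b < G.n) (hib : i ∉ Set.Ioc a b) :
    G.node j i ∉ G.arc j a b := by
  rintro ⟨i', hi', h⟩
  exact hib (G.injOn_node hj (hi'.2.trans_lt hb) hi h ▸ hi')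

theorem disjoint_before_upTo (hj : j + 1 < G.m) : Disjoint (G.before j) (G.upTo j) := by
  have hk := G.k_lt hj
  rw [Set.disjoint_left]
  rintro _ ⟨i, ⟨hi, hik⟩, rfl⟩
  exact G.node_succ_notMem_upTo hj (by omega) (by omega)

theorem disjoint_after_upTo (hj : j + 1 < G.m) : Disjoint (G.after j) (G.upTo j) := by
  rw [Set.disjoint_left]
  rintro _ ⟨i, ⟨hi, hin⟩, rfl⟩
  exact G.node_succ_notMem_upTo hj (by omega) hi.ne'

theorem disjoint_before_after (hj : j + 1 < G.m) : Disjoint (G.before j) (G.after j) := by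
  have hk := G.k_lt hj
  rw [Set.disjoint_left]
  rintro _ ⟨i, ⟨hi, hik⟩, rfl⟩
  exact G.node_notMem_arc hj (by omega) (by omega) fun h => by have := h.1; omega

theorem eq_of_adj_node_succ (hj : j < G.m) (hi : i + 1 < G.n)
    (hk : ∀ j', j = j' + 1 → i + 1 ≠ G.k j') (hx : G.adj x (G.node j (i + 1))) :
    x = G.node j i := by
  rw [G.adj_eq] at hx
  obtain ⟨j', i', hj', hi', rfl, hnode⟩ := hx
  rcases G.eq_or_shared_of_node_eq hj hi hj' (Nat.mod_lt _ (by omega)) hnode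
    with ⟨rfl, h⟩ | ⟨-, h, -⟩ | ⟨hjj', -, h⟩
  · obtain hlt | heq := (show i' + 1 ≤ G.n from hi').lt_or_eq
    · rw [Nat.mod_eq_of_lt hlt] at h
      rw [show i' = i by omega]
    · rw [heq, Nat.mod_self] at h
      omega
  · omega
  · exact absurd h (hk _ hjj')

theorem eq_of_adj_of_arc (hj : j < G.m) (hb : b < G.n)
    (hk : ∀ j', j = j' + 1 → G.k j' ∉ Set.Ioc a b) (i : ℕ) (hai : a ≤ i) (hib : i < b) (x : V)
    (hx : G.adj x (G.node j (i + 1))) : x = G.node j i :=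
  G.eq_of_adj_node_succ hj (by omega)
    (fun j' hj' h => hk j' hj' (h ▸ ⟨by omega, by omega⟩)) hx

theorem adj_node_zero_iff (hj : j < G.m) : G.adj x (G.node j 0) ↔
    x = G.last j ∨ j + 1 < G.m ∧ x = G.entry j := by
  have hn := G.three_le_n
  rw [G.adj_eq]
  constructor
  · rintro ⟨j', i, hj', hi, rfl, h⟩
    have hmod : (i + 1) % G.n = if i + 1 < G.n then i + 1 else 0 := by
      split_ifs with hlt
      · exact Nat.mod_eq_of_lt hlt
      · rw [show i + 1 = G.n by omega, Nat.mod_self]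
    rcases G.eq_or_shared_of_node_eq hj (by omega) hj' (Nat.mod_lt _ (by omega)) h
      with ⟨rfl, h⟩ | ⟨rfl, -, h⟩ | ⟨rfl, -, h⟩
    · exact .inl (by grind)
    · have := G.k_pos hj'
      exact .inr ⟨hj', by grind⟩
    · exact absurd h (G.k_pos hj).ne
  · rintro (rfl | ⟨hj', rfl⟩)
    · exact ⟨j, G.n - 1, hj, by omega, rfl, by simp [show G.n - 1 + 1 = G.n by omega]⟩
    · have hk := G.k_pos hj'
      have hkn := G.k_lt hj'
      refine ⟨j + 1, G.k j - 1, hj', by omega, rfl, ?_⟩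
      rw [G.node_zero hj', Nat.sub_add_cancel hk, Nat.mod_eq_of_lt hkn]

theorem entry_notMem_upTo (hj : j + 1 < G.m) : G.entry j ∉ G.upTo j := by
  have hk := G.k_pos hj
  exact G.node_succ_notMem_upTo hj ((Nat.sub_le _ _).trans_lt (G.k_lt hj)) (by omega)

theorem last_mem_upTo (j : ℕ) : G.last j ∈ G.upTo j :=
  G.node_mem_upTo (by have := G.three_le_n; omega)

theorem last_ne_node_zero (hj : j < G.m) : G.last j ≠ G.node j 0 := by
  have := G.three_le_n
  exact G.node_ne hj (by omega) (by omega) (by omega)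

theorem entry_notMem_after (hj : j + 1 < G.m) : G.entry j ∉ G.after j := by
  have hk := G.k_pos hj
  have hkn := G.k_lt hj
  exact G.node_notMem_arc hj (by omega) (by omega) fun h => by have := h.1; omega

theorem last_succ_notMem_before (hj : j + 1 < G.m) : G.last (j + 1) ∉ G.before j := by
  have hk := G.k_pos hj
  have hkn := G.k_lt hj
  exact G.node_notMem_arc hj (by omega) (by omega) fun h => by have := h.2; omega

theorem mem_upTo_of_adj (hj : j < G.m) (hu : u ∈ G.upTo j \ {G.node j 0}) (hx : G.adj x u) :
    x ∈ G.upTo j := by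
  obtain ⟨⟨j₁, hj₁, i₁, hi₁, rfl⟩, hne⟩ := hu
  rw [G.adj_eq] at hx
  obtain ⟨j₂, i₂, hj₂, hi₂, rfl, h⟩ := hx
  refine ⟨j₂, ?_, i₂, hi₂, rfl⟩
  rcases G.eq_or_shared_of_node_eq (by omega) hi₁ hj₂ (Nat.mod_lt _ (by omega)) h
    with h | ⟨rfl, rfl, -⟩ | h
  · omega
  · have : j₁ ≠ j := by rintro rfl; exact hne rfl
    omega
  · omega

/-- The weight of the edge from `entry j` to the shared node `node j 0`; it is `0` for the last
cycle, where `entry j` is meaningless. -/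
noncomputable def entryWeight (j : ℕ) : ℝ :=
  if j + 1 < G.m then G.weight (G.entry j) (G.node j 0) else 0

/-- The colour `c` is a best response of `node j 0` when `last j` plays `p` and `entry j`
plays `x`. -/
def IsTopReply (j : ℕ) (p x c : M) : Prop :=
  IsBestReply (G.colours (G.node j 0)) (G.weight (G.last j) (G.node j 0)) (G.entryWeight j) p x c

theorem exists_isTopReply (hC : (G.colours (G.node j 0)).Nonempty) (p x : M) :
    ∃ t, G.IsTopReply j p x t :=
  exists_isBestReply hC _ _ p x

theorem weight_last_nonneg (hj : j < G.m) : 0 ≤ G.weight (G.last j) (G.node j 0) :=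
  G.weight_nonneg _ _ ((G.adj_node_zero_iff hj).2 (.inl rfl))

theorem entryWeight_nonneg (hj : j < G.m) : 0 ≤ G.entryWeight j := by
  rw [entryWeight]
  split_ifs with hj'
  · exact G.weight_nonneg _ _ ((G.adj_node_zero_iff hj).2 (.inr ⟨hj', rfl⟩))
  · exact le_rfl

end Structure

section TopNode

variable [Fintype V] {G : OpenChainGame V M} {j a b : ℕ} {s s' s₀ : V → M} {c t : M}

theorem payoff_node_zero (hj : j < G.m) (s : V → M) :
    payoff G.adj G.weight G.bonus s (G.node j 0) =
      (if s (G.last j) = s (G.node j 0) then G.weight (G.last j) (G.node j 0) else 0) +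
      (if s (G.entry j) = s (G.node j 0) then G.entryWeight j else 0) := by
  rw [payoff, G.bonus_eq_zero, Nat.cast_zero, add_zero, ← Finset.filter_filter, Finset.sum_filter]
  by_cases hj' : j + 1 < G.m
  · have hne : G.last j ≠ G.entry j := fun h => G.entry_notMem_upTo hj' (h ▸ G.last_mem_upTo j)
    have hsources : Finset.univ.filter (fun x => G.adj x (G.node j 0)) = {G.last j, G.entry j} := by
      ext x
      simp [G.adj_node_zero_iff hj, hj']
    rw [hsources, Finset.sum_pair hne, entryWeight, if_pos hj']
  · have hsources : Finset.univ.filter (fun x => G.adj x (G.node j 0)) = {G.last j} := by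
      ext x
      simp [G.adj_node_zero_iff hj, hj']
    rw [hsources, Finset.sum_singleton, entryWeight, if_neg hj', ite_self, add_zero]

/-- The state `s` only records the colour of `entry j`, which lies outside `upTo j`; for the last
cycle that colour has weight `0`. -/
theorem stable_update_node_zero_iff (hj : j < G.m) (h : Set.EqOn s' s (G.upTo j)ᶜ) :
    G.Stable (Function.update s' (G.node j 0) c) (G.node j 0) ↔
      G.IsTopReply j (s' (G.last j)) (s (G.entry j)) c := by
  have hpayoff : ∀ d, payoff G.adj G.weight G.bonus (Function.update s' (G.node j 0) d)
      (G.node j 0) =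
      (if s' (G.last j) = d then G.weight (G.last j) (G.node j 0) else 0) +
      (if s (G.entry j) = d then G.entryWeight j else 0) := by
    intro d
    rw [payoff_node_zero hj, Function.update_self, Function.update_of_ne (G.last_ne_node_zero hj)]
    by_cases hj' : j + 1 < G.m
    · have hentry := G.entry_notMem_upTo hj'
      have hne : G.entry j ≠ G.node j 0 := fun h => hentry (h ▸ G.node_zero_mem_upTo j)
      rw [Function.update_of_ne hne, h hentry]
    · simp only [entryWeight, if_neg hj', ite_self]
  simp only [Game.Stable, Function.update_self, Function.update_idem, hpayoff, IsTopReply,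
    IsBestReply]

theorem stable_node_zero_iff (hj : j < G.m) (h : Set.EqOn s' s (G.upTo j)ᶜ) :
    G.Stable s' (G.node j 0) ↔
      G.IsTopReply j (s' (G.last j)) (s (G.entry j)) (s' (G.node j 0)) := by
  rw [← stable_update_node_zero_iff hj h, Function.update_eq_self]

theorem stable_node_zero_congr (hj : j < G.m) (h : G.Stable s (G.node j 0))
    (htop : s' (G.node j 0) = s (G.node j 0)) (hlast : s' (G.last j) = s (G.last j))
    (hentry : j + 1 < G.m → s' (G.entry j) = s (G.entry j)) : G.Stable s' (G.node j 0) := by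
  refine h.congr htop fun x hx => ?_
  rcases (G.adj_node_zero_iff hj).1 hx with rfl | ⟨hj', rfl⟩
  · exact hlast
  · exact hentry hj'

theorem stable_node_zero_of_entry_eq (hj : j < G.m) (h : G.Stable s (G.node j 0))
    (htop : s' (G.node j 0) = s (G.node j 0)) (hlast : s' (G.last j) = s (G.last j))
    (hentry : s' (G.entry j) = s' (G.node j 0)) : G.Stable s' (G.node j 0) := by
  rw [stable_node_zero_iff hj (Set.eqOn_refl _ _)] at h ⊢
  rw [hlast, hentry, htop]
  exact h.right_self (G.entryWeight_nonneg hj)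

end TopNode

section Dynamics

variable [Fintype V] {G : OpenChainGame V M} {j a b B : ℕ} {s s' s₀ : V → M} {t : M}

theorem stableOn_upTo_diff_congr (hj : j < G.m)
    (h : G.StableOn s (G.upTo j \ {G.node j 0})) (heq : Set.EqOn s' s (G.upTo j)) :
    G.StableOn s' (G.upTo j \ {G.node j 0}) :=
  h.congr Set.sdiff_subset (fun _ hu _ hx => G.mem_upTo_of_adj hj hu hx) heq

theorem stableOn_upTo_of_diff (h : G.StableOn s (G.upTo j \ {G.node j 0}))
    (htop : G.Stable s (G.node j 0)) : G.StableOn s (G.upTo j) := fun u hu => by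
  by_cases hu0 : u = G.node j 0
  · exact hu0 ▸ htop
  · exact h u ⟨hu, hu0⟩

theorem stableOn_upTo_congr (hj : j < G.m) (h : G.StableOn s (G.upTo j))
    (heq : Set.EqOn s' s (G.upTo j)) (hentry : j + 1 < G.m → s' (G.entry j) = s (G.entry j)) :
    G.StableOn s' (G.upTo j) :=
  stableOn_upTo_of_diff (stableOn_upTo_diff_congr hj (h.mono Set.sdiff_subset) heq)
    (stable_node_zero_congr hj (h _ (G.node_zero_mem_upTo j)) (heq (G.node_zero_mem_upTo j))
      (heq (G.last_mem_upTo j)) hentry)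

theorem stableOn_arc_congr (hj : j < G.m) (hb : b < G.n)
    (hk : ∀ j', j = j' + 1 → G.k j' ∉ Set.Ioc a b) (h : G.StableOn s (G.arc j a b))
    (heq : Set.EqOn s' s (G.arc j a b)) (ha : s' (G.node j a) = s (G.node j a)) :
    G.StableOn s' (G.arc j a b) := by
  refine h.congr_path (G.eq_of_adj_of_arc hj hb hk) ?_
  rintro _ ⟨i, ⟨hai, hib⟩, rfl⟩
  obtain rfl | hlt := hai.eq_or_lt
  · exact ha
  · exact heq ⟨i, ⟨hlt, hib⟩, rfl⟩

theorem exists_reach_arc (hj : j < G.m) (hab : a ≤ b) (hb : b < G.n)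
    (hk : ∀ j', j = j' + 1 → G.k j' ∉ Set.Ioc a b) (hs : Valid G.colours s) :
    ∃ s', G.Reach (G.arc j a b) (b - a) s s' ∧ G.StableOn s' (G.arc j a b) ∧
      ∀ s₀, Set.EqOn s s₀ (G.arc j a b) → G.StableOn s₀ (G.arc j a b) →
        s' (G.node j b) = s₀ (G.node j b) ∨ s' (G.node j b) = s (G.node j a) :=
  Game.exists_reach_stableOn_path G.bonus_eq_zero G.weight_nonneg hab
    ((G.injOn_node hj).mono fun _ hi => hi.2.trans_lt hb) (G.eq_of_adj_of_arc hj hb hk) hs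

theorem stableOn_before_congr (hj : j + 1 < G.m) (h : G.StableOn s (G.before j))
    (heq : Set.EqOn s' s (G.before j)) (htop : s' (G.node (j + 1) 0) = s (G.node (j + 1) 0)) :
    G.StableOn s' (G.before j) := by
  have hk := G.k_pos hj
  have hkn := G.k_lt hj
  exact stableOn_arc_congr hj (by omega) (by rintro _ ⟨⟩ ⟨-, h⟩; omega) h heq htop

theorem stableOn_after_congr (hj : j + 1 < G.m) (h : G.StableOn s (G.after j))
    (heq : Set.EqOn s' s (G.after j)) (hshared : s' (G.node j 0) = s (G.node j 0)) :
    G.StableOn s' (G.after j) := by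
  rw [G.node_zero hj] at hshared
  exact stableOn_arc_congr hj (by have := G.three_le_n; omega)
    (by rintro _ ⟨⟩ ⟨h, -⟩; exact h.false) h heq hshared

theorem exists_reach_before (hj : j + 1 < G.m) (hs : Valid G.colours s) :
    ∃ s', G.Reach (G.before j) (G.k j - 1) s s' ∧ G.StableOn s' (G.before j) ∧
      ∀ s₀, Set.EqOn s s₀ (G.before j) → G.StableOn s₀ (G.before j) →
        s' (G.entry j) = s₀ (G.entry j) ∨ s' (G.entry j) = s (G.node (j + 1) 0) := by
  have hk := G.k_pos hj
  have hkn := G.k_lt hj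
  exact exists_reach_arc hj (Nat.zero_le _) (by omega) (by rintro _ ⟨⟩ ⟨-, h⟩; omega) hs

theorem exists_reach_after (hj : j + 1 < G.m) (hs : Valid G.colours s) :
    ∃ s', G.Reach (G.after j) (G.n - 1 - G.k j) s s' ∧ G.StableOn s' (G.after j) ∧
      ∀ s₀, Set.EqOn s s₀ (G.after j) → G.StableOn s₀ (G.after j) →
        s' (G.last (j + 1)) = s₀ (G.last (j + 1)) ∨
          s' (G.last (j + 1)) = s (G.node j 0) := by
  have hkn := G.k_lt hj
  rw [G.node_zero hj]
  exact exists_reach_arc hj (by omega) (by omega) (by rintro _ ⟨⟩ ⟨h, -⟩; exact h.false) hs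

variable (G) in
/-- Whenever a state stable on the cycles `0, …, j` is changed outside these cycles, at most `B`
deviations inside them make it stable on them again. -/
def Restabilises (j B : ℕ) : Prop :=
  ∀ s s₀, Valid G.colours s → Set.EqOn s s₀ (G.upTo j) → G.StableOn s₀ (G.upTo j) →
    ∃ s', G.Reach (G.upTo j) B s s' ∧ G.StableOn s' (G.upTo j)

theorem exists_reach_stableOn_upTo_zero (hs : Valid G.colours s)
    (hoff : G.StableOn s (G.upTo 0 \ {G.node 0 0})) :
    ∃ s', G.Reach (G.upTo 0) G.n s s' ∧ G.StableOn s' (G.upTo 0) := by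
  have hn := G.three_le_n
  have hm : 0 < G.m := by have := G.isOpenChain.1; omega
  by_cases htop : G.Stable s (G.node 0 0)
  · exact ⟨s, .refl _ _, stableOn_upTo_of_diff hoff htop⟩
  obtain ⟨t, ht⟩ := Game.exists_stable_update ⟨_, hs (G.node 0 0)⟩ s
  have hreach₁ := Game.reach_update hs htop ht
  have htop_notMem : G.node 0 0 ∉ G.arc 0 0 (G.n - 1) :=
    G.node_notMem_arc hm (by omega) (by omega) (by simp)
  obtain ⟨s₂, hreach₂, hstable₂, hlast⟩ := exists_reach_arc hm (Nat.zero_le (G.n - 1))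
    (by omega) (by simp) (hreach₁.valid hs)
  have hreach : G.Reach (G.upTo 0) G.n s s₂ :=
    ((hreach₁.mono (by simpa using G.node_zero_mem_upTo 0) le_rfl).trans
      (hreach₂.mono (G.upTo_zero_diff ▸ Set.sdiff_subset) le_rfl)).mono subset_rfl (by omega)
  refine ⟨s₂, hreach, stableOn_upTo_of_diff (G.upTo_zero_diff ▸ hstable₂) ?_⟩
  have ht₂ : s₂ (G.node 0 0) = t := by
    rw [hreach₂.eqOn_compl htop_notMem, Function.update_self]
  have hreply := (stable_update_node_zero_iff hm (Set.eqOn_refl s _)).1 ht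
  rw [stable_node_zero_iff hm hreach.eqOn_compl, ht₂]
  rcases hlast s (hreach₁.eqOn (by simpa using htop_notMem)) (G.upTo_zero_diff ▸ hoff)
    with hold | hnew
  · exact hold ▸ hreply
  · rw [show s₂ (G.last 0) = t by rw [hnew, Function.update_self]]
    exact hreply.left_self (G.weight_last_nonneg hm)

/-- The order of play is: the segment before `node j 0`, the cycles `0, …, j`, the segment
after. -/
theorem exists_reach_stableOn_upTo_succ_diff (hj : j + 1 < G.m) (hR : G.Restabilises j B)
    (hs : Valid G.colours s) (heq : Set.EqOn s s₀ (G.upTo j)) (h₀ : G.StableOn s₀ (G.upTo j)) :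
    ∃ s', G.Reach (G.upTo (j + 1) \ {G.node (j + 1) 0}) (B + G.n) s s' ∧
      G.StableOn s' (G.upTo (j + 1) \ {G.node (j + 1) 0}) ∧
      (G.StableOn s (G.after j) →
        s' (G.last (j + 1)) = s (G.last (j + 1)) ∨ s' (G.last (j + 1)) = s' (G.node j 0)) := by
  have hkn := G.k_lt hj
  have hbefore := G.disjoint_before_upTo hj
  have hafter := G.disjoint_after_upTo hj
  have htop := G.node_zero_succ_notMem_upTo hj
  obtain ⟨s₁, hreach₁, hstable₁, -⟩ := exists_reach_before hj hs
  obtain ⟨s₂, hreach₂, hstable₂⟩ :=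
    hR s₁ s₀ (hreach₁.valid hs) ((hreach₁.eqOn hbefore).trans heq) h₀
  obtain ⟨s₃, hreach₃, hstable₃, hlast⟩ :=
    exists_reach_after hj (hreach₂.valid (hreach₁.valid hs))
  have heq₃ := hreach₃.eqOn hafter
  refine ⟨s₃, ?_, ?_, fun hold => ?_⟩
  · exact ((hreach₁.mono (G.before_subset_upTo_succ_diff hj) le_rfl).trans
      ((hreach₂.mono (G.upTo_subset_upTo_succ_diff hj) le_rfl).trans
        (hreach₃.mono (G.after_subset_upTo_succ_diff hj) le_rfl))).mono subset_rfl (by omega)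
  · rw [G.upTo_succ_diff hj]
    rintro u ((hu | hu) | hu)
    · exact stableOn_upTo_congr (by omega) hstable₂ heq₃
        (fun _ => hreach₃.eqOn_compl (G.entry_notMem_after hj)) u hu
    · have hdisj := G.disjoint_before_after hj
      exact stableOn_before_congr hj hstable₁
        ((hreach₃.eqOn hdisj.symm).trans (hreach₂.eqOn hbefore.symm))
        ((hreach₃.eqOn_compl fun h => (G.after_subset_upTo_succ_diff hj h).2 rfl).trans
          (hreach₂.eqOn_compl htop)) u hu
    · exact hstable₃ u hu
  · rw [heq₃ (G.node_zero_mem_upTo j)]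
    exact hlast s ((hreach₂.eqOn hafter.symm).trans
      (hreach₁.eqOn (G.disjoint_before_after hj))) hold

theorem exists_reach_of_not_stable_node_zero (hj : j + 1 < G.m) (hR : G.Restabilises j B)
    (hs : Valid G.colours s) (hoff : G.StableOn s (G.upTo (j + 1) \ {G.node (j + 1) 0}))
    (htop : ¬ G.Stable s (G.node (j + 1) 0))
    (ht : G.Stable (Function.update s (G.node (j + 1) 0) t) (G.node (j + 1) 0)) :
    ∃ s', G.Reach (G.upTo (j + 1)) (B + G.n + 1) s s' ∧
      G.StableOn s' (G.upTo (j + 1) \ {G.node (j + 1) 0}) ∧ s' (G.node (j + 1) 0) = t ∧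
      (G.Stable s' (G.node (j + 1) 0) ∨ s' (G.last (j + 1)) = s' (G.node j 0)) := by
  have hlow : Disjoint {G.node (j + 1) 0} (G.upTo j) :=
    Set.disjoint_singleton_left.2 (G.node_zero_succ_notMem_upTo hj)
  have hafter : Disjoint {G.node (j + 1) 0} (G.after j) :=
    Set.disjoint_singleton_left.2 fun h => (G.after_subset_upTo_succ_diff hj h).2 rfl
  have hreach₁ := Game.reach_update hs htop ht
  obtain ⟨s', hreach, hstable, hlast⟩ := exists_reach_stableOn_upTo_succ_diff hj hR
    (hreach₁.valid hs) (hreach₁.eqOn hlow) (hoff.mono (G.upTo_subset_upTo_succ_diff hj))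
  have htop' := hreach.eqOn_compl (x := G.node (j + 1) 0) fun h => h.2 rfl
  refine ⟨s', ?_, hstable, htop'.trans (Function.update_self ..), ?_⟩
  · exact ((hreach₁.mono (by simpa using G.node_zero_mem_upTo _) le_rfl).trans
      (hreach.mono Set.sdiff_subset le_rfl)).mono subset_rfl (by omega)
  · refine (hlast ?_).imp_left fun hlast => ?_
    · exact stableOn_after_congr hj (hoff.mono (G.after_subset_upTo_succ_diff hj))
        (hreach₁.eqOn hafter) (hreach₁.eqOn hlow (G.node_zero_mem_upTo j))
    · exact stable_node_zero_congr hj ht htop' hlast fun hj' =>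
        hreach.eqOn_compl fun h => G.entry_notMem_upTo hj' h.1

/-- The switch of `node (j + 1) 0` to the colour shared by `last (j + 1)` and `node j 0` can travel
as far as `entry j`, where it only supports the present colour of `node j 0`. -/
theorem exists_reach_stableOn_upTo_succ_of_last_eq (hj : j + 1 < G.m) (hs : Valid G.colours s)
    (hoff : G.StableOn s (G.upTo (j + 1) \ {G.node (j + 1) 0}))
    (htop : ¬ G.Stable s (G.node (j + 1) 0))
    (hlast : s (G.last (j + 1)) = s (G.node j 0))
    (hreply : G.Stable (Function.update s (G.node (j + 1) 0) (s (G.last (j + 1))))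
      (G.node (j + 1) 0)) :
    ∃ s', G.Reach (G.upTo (j + 1)) G.n s s' ∧ G.StableOn s' (G.upTo (j + 1)) := by
  have hk := G.k_pos hj
  have hkn := G.k_lt hj
  have hbefore := G.disjoint_before_upTo hj
  have htop_before : G.node (j + 1) 0 ∉ G.before j := fun h =>
    (G.before_subset_upTo_succ_diff hj h).2 rfl
  have hreach₁ := Game.reach_update hs htop hreply
  obtain ⟨s', hreach₂, hstable, hentry⟩ := exists_reach_before hj (hreach₁.valid hs)
  have heq_low : Set.EqOn s' s (G.upTo j) := (hreach₂.eqOn hbefore).trans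
    (hreach₁.eqOn (Set.disjoint_singleton_left.2 (G.node_zero_succ_notMem_upTo hj)))
  have hreach : G.Reach (G.upTo (j + 1)) G.n s s' :=
    ((hreach₁.mono (by simpa using G.node_zero_mem_upTo _) le_rfl).trans (hreach₂.mono
      ((G.before_subset_upTo_succ_diff hj).trans Set.sdiff_subset) le_rfl)).mono
        subset_rfl (by omega)
  have htop_stable : G.Stable s' (G.node (j + 1) 0) :=
    stable_node_zero_congr hj hreply (hreach₂.eqOn_compl htop_before)
      (hreach₂.eqOn_compl (G.last_succ_notMem_before hj)) fun hj' => hreach₂.eqOn_compl fun h =>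
        G.entry_notMem_upTo hj' (G.before_subset_upTo_succ_diff hj h).1
  have hshared := heq_low (G.node_zero_mem_upTo j)
  have hshared_stable : G.Stable s' (G.node j 0) := by
    have hold := hoff _ (G.upTo_subset_upTo_succ_diff hj (G.node_zero_mem_upTo j))
    rcases hentry s (hreach₁.eqOn (Set.disjoint_singleton_left.2 htop_before))
      (hoff.mono (G.before_subset_upTo_succ_diff hj)) with hentry | hentry
    · exact stable_node_zero_congr (by omega) hold hshared (heq_low (G.last_mem_upTo j))
        fun _ => hentry
    · rw [Function.update_self, hlast, ← hshared] at hentry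
      exact stable_node_zero_of_entry_eq (by omega) hold hshared (heq_low (G.last_mem_upTo j))
        hentry
  refine ⟨s', hreach, stableOn_upTo_of_diff ?_ htop_stable⟩
  rw [G.upTo_succ_diff hj]
  rintro u ((hu | hu) | hu)
  · exact stableOn_upTo_of_diff (stableOn_upTo_diff_congr (by omega)
      (hoff.mono (Set.sdiff_subset.trans (G.upTo_subset_upTo_succ_diff hj))) heq_low)
      hshared_stable u hu
  · exact hstable u hu
  · have hafter := hoff.mono (G.after_subset_upTo_succ_diff hj)
    refine stableOn_after_congr hj hafter ?_ hshared u hu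
    exact (hreach₂.eqOn (G.disjoint_before_after hj)).trans (hreach₁.eqOn
      (Set.disjoint_singleton_left.2 fun h => (G.after_subset_upTo_succ_diff hj h).2 rfl))

theorem exists_reach_stableOn_upTo_succ_of_left_best (hj : j + 1 < G.m)
    (hR : G.Restabilises j B) (hs : Valid G.colours s)
    (hoff : G.StableOn s (G.upTo (j + 1) \ {G.node (j + 1) 0}))
    (htop : ¬ G.Stable s (G.node (j + 1) 0))
    (ht : G.IsTopReply (j + 1) (s (G.last (j + 1))) (s (G.entry (j + 1))) t)
    (hbest : ∀ y, ¬ G.IsTopReply (j + 1) y (s (G.entry (j + 1))) t →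
      G.IsTopReply (j + 1) y (s (G.entry (j + 1))) y) :
    ∃ s', G.Reach (G.upTo (j + 1)) (B + 3 * G.n) s s' ∧ G.StableOn s' (G.upTo (j + 1)) := by
  have hn := G.three_le_n
  rw [← stable_update_node_zero_iff hj (Set.eqOn_refl s _)] at ht
  obtain ⟨s₁, hreach₁, hoff₁, htop_eq, hlast⟩ :=
    exists_reach_of_not_stable_node_zero hj hR hs hoff htop ht
  by_cases htop₁ : G.Stable s₁ (G.node (j + 1) 0)
  · exact ⟨s₁, hreach₁.mono subset_rfl (by omega), stableOn_upTo_of_diff hoff₁ htop₁⟩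
  have hreply := hbest (s₁ (G.last (j + 1)))
  rw [← htop_eq, ← stable_node_zero_iff hj hreach₁.eqOn_compl,
    ← stable_update_node_zero_iff hj hreach₁.eqOn_compl] at hreply
  obtain ⟨s₂, hreach₂, hstable₂⟩ := exists_reach_stableOn_upTo_succ_of_last_eq hj
    (hreach₁.valid hs) hoff₁ htop₁ (hlast.resolve_left htop₁) (hreply htop₁)
  exact ⟨s₂, (hreach₁.trans hreach₂).mono subset_rfl (by omega), hstable₂⟩

theorem Restabilises.succ (hj : j + 1 < G.m) (hR : G.Restabilises j B) :
    G.Restabilises (j + 1) (B + 3 * G.n) := by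
  intro s s₀ hs heq h₀
  have hoff := stableOn_upTo_diff_congr hj (h₀.mono Set.sdiff_subset) heq
  by_cases htop : G.Stable s (G.node (j + 1) 0)
  · exact ⟨s, .refl _ _, stableOn_upTo_of_diff hoff htop⟩
  obtain ⟨t, ht, hpref⟩ : ∃ t,
      G.IsTopReply (j + 1) (s (G.last (j + 1))) (s (G.entry (j + 1))) t ∧
      (G.IsTopReply (j + 1) (s (G.last (j + 1))) (s (G.entry (j + 1))) (s (G.entry (j + 1))) →
        t = s (G.entry (j + 1))) := by
    by_cases hentry : G.IsTopReply (j + 1) (s (G.last (j + 1))) (s (G.entry (j + 1)))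
      (s (G.entry (j + 1)))
    · exact ⟨_, hentry, fun _ => rfl⟩
    · obtain ⟨t, ht⟩ := G.exists_isTopReply ⟨_, hs (G.node (j + 1) 0)⟩ (s (G.last (j + 1)))
        (s (G.entry (j + 1)))
      exact ⟨t, ht, fun h => absurd h hentry⟩
  refine exists_reach_stableOn_upTo_succ_of_left_best hj hR hs hoff htop ht fun y hy => ?_
  have hold := h₀ _ (G.node_zero_mem_upTo (j + 1))
  rw [stable_node_zero_iff hj (Set.eqOn_refl s₀ _), ← heq (G.last_mem_upTo _),
    ← heq (G.node_zero_mem_upTo _)] at hold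
  rw [stable_node_zero_iff hj (Set.eqOn_refl s _)] at htop
  exact hold.left_best_of_right_preferred (G.weight_last_nonneg hj) (G.entryWeight_nonneg hj)
    htop ht hpref hy

theorem restabilises (hj : j < G.m) : G.Restabilises j (3 * G.n * (j + 1)) := by
  induction j with
  | zero =>
    intro s s₀ hs heq h₀
    obtain ⟨s', hreach, hstable⟩ := exists_reach_stableOn_upTo_zero hs
      (stableOn_upTo_diff_congr hj (h₀.mono Set.sdiff_subset) heq)
    exact ⟨s', hreach.mono subset_rfl (by omega), hstable⟩
  | succ j ih => exact (ih (by omega)).succ hj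

theorem exists_reach_stableOn_upTo_succ_of_diff (hj : j + 1 < G.m) (hR : G.Restabilises j B)
    (hs : Valid G.colours s) (hoff : G.StableOn s (G.upTo (j + 1) \ {G.node (j + 1) 0})) :
    ∃ s', G.Reach (G.upTo (j + 1)) (2 * B + 5 * G.n) s s' ∧
      G.StableOn s' (G.upTo (j + 1)) := by
  have hn := G.three_le_n
  by_cases htop : G.Stable s (G.node (j + 1) 0)
  · exact ⟨s, .refl _ _, stableOn_upTo_of_diff hoff htop⟩
  obtain ⟨t₁, ht₁⟩ := Game.exists_stable_update ⟨_, hs (G.node (j + 1) 0)⟩ s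
  obtain ⟨s₁, hreach₁, hoff₁, -, hlast₁⟩ :=
    exists_reach_of_not_stable_node_zero hj hR hs hoff htop ht₁
  by_cases htop₁ : G.Stable s₁ (G.node (j + 1) 0)
  · exact ⟨s₁, hreach₁.mono subset_rfl (by omega), stableOn_upTo_of_diff hoff₁ htop₁⟩
  have hs₁ := hreach₁.valid hs
  obtain ⟨s₂, hreach₂, hstable₂⟩ :
      ∃ s₂, G.Reach (G.upTo (j + 1)) (B + 3 * G.n) s₁ s₂ ∧ G.StableOn s₂ (G.upTo (j + 1)) := by
    by_cases hreply : G.IsTopReply (j + 1) (s₁ (G.last (j + 1))) (s₁ (G.entry (j + 1)))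
      (s₁ (G.last (j + 1)))
    · rw [← stable_update_node_zero_iff hj (Set.eqOn_refl s₁ _)] at hreply
      obtain ⟨s₂, hreach₂, hstable₂⟩ := exists_reach_stableOn_upTo_succ_of_last_eq hj hs₁ hoff₁
        htop₁ (hlast₁.resolve_left htop₁) hreply
      exact ⟨s₂, hreach₂.mono subset_rfl (by omega), hstable₂⟩
    · obtain ⟨t₂, ht₂⟩ := G.exists_isTopReply ⟨_, hs₁ (G.node (j + 1) 0)⟩ (s₁ (G.last (j + 1)))
        (s₁ (G.entry (j + 1)))
      have hne : t₂ ≠ s₁ (G.last (j + 1)) := fun h => hreply (h ▸ ht₂)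
      exact exists_reach_stableOn_upTo_succ_of_left_best hj hR hs₁ hoff₁ htop₁ ht₂
        fun _ hy => ht₂.left_best_of_not (G.weight_last_nonneg hj) hne hy
  exact ⟨s₂, (hreach₁.trans hreach₂).mono subset_rfl (by omega), hstable₂⟩

theorem exists_reach_stableOn_upTo (hj : j < G.m) (hs : Valid G.colours s) :
    ∃ s', G.Reach (G.upTo j) (5 * G.n * (j + 1) ^ 2) s s' ∧ G.StableOn s' (G.upTo j) := by
  have hn := G.three_le_n
  induction j with
  | zero =>
    obtain ⟨s₁, hreach₁, hstable₁, -⟩ := exists_reach_arc hj (Nat.zero_le (G.n - 1))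
      (by omega) (by simp) hs
    rw [← G.upTo_zero_diff] at hreach₁ hstable₁
    obtain ⟨s₂, hreach₂, hstable₂⟩ :=
      exists_reach_stableOn_upTo_zero (hreach₁.valid hs) hstable₁
    exact ⟨s₂, ((hreach₁.mono Set.sdiff_subset le_rfl).trans hreach₂).mono subset_rfl
      (by omega), hstable₂⟩
  | succ j ih =>
    have hR := restabilises (G := G) (j := j) (by omega)
    obtain ⟨s₁, hreach₁, hstable₁⟩ := ih (by omega)
    have hs₁ := hreach₁.valid hs
    obtain ⟨s₂, hreach₂, hoff₂, -⟩ :=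
      exists_reach_stableOn_upTo_succ_diff hj hR hs₁ (Set.eqOn_refl _ _) hstable₁
    obtain ⟨s₃, hreach₃, hstable₃⟩ :=
      exists_reach_stableOn_upTo_succ_of_diff hj hR (hreach₂.valid hs₁) hoff₂
    refine ⟨s₃, ((hreach₁.mono (G.upTo_subset_upTo_succ j) le_rfl).trans
      ((hreach₂.mono Set.sdiff_subset le_rfl).trans hreach₃)).mono subset_rfl ?_, hstable₃⟩
    nlinarith

end Dynamics

end OpenChainGame

theorem weighted_open_chain_improvement_path_general {V M : Type} [Fintype V] {m n : ℕ}
    {node : ℕ → ℕ → V} {k : ℕ → ℕ} (h : IsOpenChain m n node k) {w : V → V → ℝ}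
    (hw : ∀ u v, chainAdj m n node u v → 0 ≤ w u v) {C : V → Finset M} {s : V → M}
    (hs : Valid C s) :
    ∃ L, L ≤ 5 * n * m ^ 2 ∧ ImpPath (chainAdj m n node) w (fun _ _ => 0) C s L := by
  let G : OpenChainGame V M :=
    { adj := chainAdj m n node, weight := w, bonus := fun _ _ => 0, colours := C, m := m, n := n,
      node := node, k := k, isOpenChain := h, adj_eq := rfl, bonus_eq_zero := fun _ _ => rfl,
      weight_nonneg := hw }
  have hm : 2 ≤ m := h.1
  obtain ⟨s', hreach, hstable⟩ :=
    OpenChainGame.exists_reach_stableOn_upTo (G := G) (j := m - 1) (by grind) hs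
  have hcover : ∀ v, v ∈ G.upTo (m - 1) := fun v =>
    let ⟨j, i, hj, hi, hv⟩ := h.2.2.2.2.2 v
    ⟨j, by omega, i, hi, hv.symm⟩
  obtain ⟨L, hL, hpath⟩ := hreach.exists_impPath
    (Game.isNash_of_forall_stable fun v => hstable v (hcover v))
  rw [Nat.sub_add_cancel (by omega)] at hL
  exact ⟨L, hL, hpath⟩

/-- There is a constant `c` such that every coordination game without bonuses
on a weighted open chain of `m` cycles, each cycle having `n` nodes, in which
the two weights entering each shared node are distinct, admits, from every
joint strategy, a finite improvement path of length at most `c * n * m ^ 3`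
ending in a Nash equilibrium. -/
theorem weighted_open_chain_improvement_path :
    ∃ c : ℕ,
      ∀ (V : Type) [Fintype V] (M : Type) [Fintype M],
      ∀ (m n : ℕ) (node : ℕ → ℕ → V) (k : ℕ → ℕ),
        IsOpenChain m n node k →
      ∀ (w : V → V → ℝ), (∀ u v, chainAdj m n node u v → 0 ≤ w u v) →
        (∀ j, j + 1 < m →
          w (node j (n - 1)) (node j 0) ≠
            w (node (j + 1) (k j - 1)) (node (j + 1) (k j))) →
      ∀ (C : V → Finset M), (∀ i, (C i).Nonempty) →
      ∀ s : V → M, Valid C s →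
        ∃ L, L ≤ c * n * m ^ 3 ∧
          ImpPath (chainAdj m n node) w (fun _ _ => 0) C s L := by
  refine ⟨5, fun V _ M _ m n node k h w hw _ C _ s hs => ?_⟩
  obtain ⟨L, hL, hpath⟩ := weighted_open_chain_improvement_path_general h hw hs
  exact ⟨L, hL.trans (Nat.mul_le_mul_left _ (Nat.pow_le_pow_right (by grind [IsOpenChain])
    (by norm_num))), hpath⟩

end CG
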